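/- arXiv:1104.3924 — 4 statements merged into one kernel-verified Lean document; each statement's English description precedes it below -/
import Mathlib

section
/- Let C > 0 and A > 0. Let h : ℝ → ℝ be differentiable with h(x) > 0 for all x, |h′(x)| ≤ C·h(x) for all x ∈ ℝ, h integrable on ℝ, and ∫_ℝ h(x) dx ≤ A. Then h(x) ≤ (C·e/2)·A for every x ∈ ℝ. -/
/-!
By Grönwall's inequality a function with `‖f'‖ ≤ C ‖f‖` decays at most exponentially away from
each point `x`, that is, `‖f y‖ ≥ ‖f x‖ exp (-C |y - x|)`. Integrating this over all `y`, instead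
of `‖f y‖ ≥ e⁻¹ ‖f x‖` over `[x - C⁻¹, x + C⁻¹]`, saves the factor `e` in the constant.
-/

open MeasureTheory

section Growth

variable {E : Type*} [NormedAddCommGroup E] [NormedSpace ℝ E] {f : ℝ → E} {C : ℝ}

theorem norm_le_norm_mul_exp_of_norm_deriv_le_of_le (hf : Differentiable ℝ f)
    (hbound : ∀ x, ‖deriv f x‖ ≤ C * ‖f x‖) {x y : ℝ} (hxy : x ≤ y) :
    ‖f y‖ ≤ ‖f x‖ * Real.exp (C * (y - x)) := by
  rw [← gronwallBound_ε0]
  exact norm_le_gronwallBound_of_norm_deriv_right_le hf.continuous.continuousOn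
    (fun t _ ↦ (hf t).hasDerivAt.hasDerivWithinAt) le_rfl
    (fun t _ ↦ (hbound t).trans_eq (add_zero _).symm) y ⟨hxy, le_rfl⟩

theorem norm_le_norm_mul_exp_of_norm_deriv_le (hf : Differentiable ℝ f)
    (hbound : ∀ x, ‖deriv f x‖ ≤ C * ‖f x‖) (x y : ℝ) :
    ‖f x‖ ≤ ‖f y‖ * Real.exp (C * |y - x|) := by
  rcases le_total y x with hyx | hxy
  · rw [abs_sub_comm, abs_of_nonneg (sub_nonneg.2 hyx)]
    exact norm_le_norm_mul_exp_of_norm_deriv_le_of_le hf hbound hyx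
  · have hbound_neg (t : ℝ) : ‖deriv (fun s ↦ f (-s)) t‖ ≤ C * ‖f (-t)‖ := by
      rw [deriv_comp_neg, norm_neg]
      exact hbound (-t)
    rw [abs_of_nonneg (sub_nonneg.2 hxy)]
    simpa only [Function.comp_apply, neg_neg, neg_sub_neg] using
      norm_le_norm_mul_exp_of_norm_deriv_le_of_le (hf.comp differentiable_neg) hbound_neg
        (neg_le_neg hxy)

end Growth

theorem integral_exp_neg_mul_abs {C : ℝ} (hC : 0 < C) :
    ∫ x : ℝ, Real.exp (-C * |x|) = 2 / C := by
  rw [integral_comp_abs (f := fun x ↦ Real.exp (-C * x)), integral_exp_mul_Ioi (neg_neg_of_pos hC),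
    mul_zero, Real.exp_zero, neg_div_neg_eq, mul_one_div]

theorem stmt2_general {E : Type*} [NormedAddCommGroup E] [NormedSpace ℝ E] {f : ℝ → E} {C : ℝ}
    (hC : 0 < C) (hf : Differentiable ℝ f) (hbound : ∀ x, ‖deriv f x‖ ≤ C * ‖f x‖)
    (hint : Integrable f) (x : ℝ) :
    ‖f x‖ ≤ C / 2 * ∫ y, ‖f y‖ := by
  have hdecay (y : ℝ) : ‖f x‖ * Real.exp (-C * |y - x|) ≤ ‖f y‖ := by
    rw [neg_mul, Real.exp_neg, ← div_eq_mul_inv, div_le_iff₀ (Real.exp_pos _)]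
    exact norm_le_norm_mul_exp_of_norm_deriv_le hf hbound x y
  calc ‖f x‖ = C / 2 * (‖f x‖ * (2 / C)) := by field_simp
    _ = C / 2 * ∫ y, ‖f x‖ * Real.exp (-C * |y - x|) := by
      rw [integral_const_mul, integral_sub_right_eq_self (fun y ↦ Real.exp (-C * |y|)) x,
        integral_exp_neg_mul_abs hC]
    _ ≤ C / 2 * ∫ y, ‖f y‖ := by
      refine mul_le_mul_of_nonneg_left ?_ (half_pos hC).le
      exact integral_mono_of_nonneg (.of_forall fun y ↦ by positivity) hint.norm
        (.of_forall hdecay)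

/-- Real-analysis core of part (3) of Lemma 5.2 (est_2): if `h > 0` is differentiable with
`|h'| ≤ C·h` and `∫_ℝ h ≤ A`, then `h ≤ (C·e/2)·A` everywhere. -/
theorem stmt2 (C A : ℝ) (hC : 0 < C) (hA : 0 < A) (h : ℝ → ℝ)
    (hdiff : Differentiable ℝ h) (hpos : ∀ x, 0 < h x)
    (hbound : ∀ x, |deriv h x| ≤ C * h x)
    (hint : Integrable h (volume : Measure ℝ))
    (hintA : ∫ x, h x ≤ A) :
    ∀ x : ℝ, h x ≤ C * Real.exp 1 / 2 * A := by
  intro x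
  have hnorm (y : ℝ) : ‖h y‖ = h y := Real.norm_of_nonneg (hpos y).le
  calc h x ≤ C / 2 * ∫ y, h y := by
        simpa only [hnorm] using
          stmt2_general hC hdiff (fun y ↦ (hbound y).trans_eq (by rw [hnorm])) hint x
    _ ≤ C / 2 * A := by gcongr
    _ ≤ C * Real.exp 1 / 2 * A := by
      gcongr
      exact le_mul_of_one_le_right hC.le (Real.one_le_exp zero_le_one)
end

section
/- Fix λ > 0, T > 0, C > 0, and t ∈ [0, T). Let f : ℝ → ℝ be twice differentiable with f′(ρ) > 0 for all ρ, with f(ρ) → a as ρ → −∞ and f(ρ) → b as ρ → +∞ where b − a = 2λ(T − t), and suppose |f″(ρ)/f′(ρ)| ≤ C for all ρ ∈ ℝ. Then f′(ρ) ≤ C·e·λ·(T − t) for every ρ ∈ ℝ. -/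
/-! If `f'' ≤ C f'`, both `f' - C f` and `exp (-C x) f'` are antitone. A function with a limit at
`±∞` has, by the mean value theorem on `[x, x + 1]`, points going to `±∞` along which `f'` tends to
`0`. Following `f' - C f` along such points towards `-∞` gives `f' ≤ C (f - a)`, and following
`exp (-C x) f'` towards `+∞` gives `0 ≤ f'`, so `f ≤ b` and `f' ≤ C (b - a)`. The constant `e`
enters only through `2 ≤ e`. -/

open Filter Set Topology

section

variable {f : ℝ → ℝ} {C : ℝ}

lemma exists_mem_Ioo_tendsto_deriv_zero {l : Filter ℝ} {c : ℝ} (hf : Differentiable ℝ f)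
    (hl : Tendsto (· + 1) l l) (hlim : Tendsto f l (𝓝 c)) :
    ∃ ξ : ℝ → ℝ, (∀ x, ξ x ∈ Ioo x (x + 1)) ∧ Tendsto (fun x ↦ deriv f (ξ x)) l (𝓝 0) := by
  have mean_value (x : ℝ) : ∃ ξ ∈ Ioo x (x + 1), deriv f ξ = f (x + 1) - f x := by
    simpa using exists_deriv_eq_slope f (lt_add_one x) hf.continuous.continuousOn
      hf.differentiableOn
  choose ξ hξ hderiv using mean_value
  refine ⟨ξ, hξ, ?_⟩
  simpa only [hderiv, sub_self, Function.comp_apply] using (hlim.comp hl).sub hlim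

lemma antitone_deriv_sub_const_mul (hf : Differentiable ℝ f) (hf' : Differentiable ℝ (deriv f))
    (hbound : ∀ x, deriv (deriv f) x ≤ C * deriv f x) :
    Antitone fun x ↦ deriv f x - C * f x := by
  refine antitone_of_hasDerivAt_nonpos
    (fun x ↦ (hf' x).hasDerivAt.sub ((hf x).hasDerivAt.const_mul C)) fun x ↦ ?_
  exact sub_nonpos.2 (hbound x)

lemma antitone_exp_neg_mul_mul (hf : Differentiable ℝ f) (hbound : ∀ x, deriv f x ≤ C * f x) :
    Antitone fun x ↦ Real.exp (-C * x) * f x := by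
  refine antitone_of_hasDerivAt_nonpos
    (fun x ↦ ((hasDerivAt_id x).const_mul (-C)).exp.mul (hf x).hasDerivAt) fun x ↦ ?_
  calc
    Real.exp (-C * x) * (-C * 1) * f x + Real.exp (-C * x) * deriv f x
        = Real.exp (-C * x) * (deriv f x - C * f x) := by ring
    _ ≤ 0 := mul_nonpos_of_nonneg_of_nonpos (Real.exp_nonneg _) (sub_nonpos.2 (hbound x))

lemma deriv_le_const_mul_sub_of_tendsto_atBot {a : ℝ} (hf : Differentiable ℝ f)
    (hf' : Differentiable ℝ (deriv f)) (hbound : ∀ x, deriv (deriv f) x ≤ C * deriv f x)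
    (ha : Tendsto f atBot (𝓝 a)) (x : ℝ) : deriv f x ≤ C * (f x - a) := by
  have hshift : Tendsto (fun y : ℝ ↦ y + 1) atBot atBot :=
    tendsto_atBot_add_const_right _ _ tendsto_id
  obtain ⟨ξ, hξ, hderiv⟩ := exists_mem_Ioo_tendsto_deriv_zero hf hshift ha
  have hξ_atBot : Tendsto ξ atBot atBot := tendsto_atBot_mono (fun y ↦ (hξ y).2.le) hshift
  have hlim : Tendsto (fun y ↦ deriv f (ξ y) - C * f (ξ y)) atBot (𝓝 (0 - C * a)) :=
    hderiv.sub ((ha.comp hξ_atBot).const_mul C)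
  have hle : deriv f x - C * f x ≤ 0 - C * a :=
    ge_of_tendsto hlim <| (hξ_atBot.eventually_le_atBot x).mono fun _ hy ↦
      antitone_deriv_sub_const_mul hf hf' hbound hy
  linarith

lemma deriv_nonneg_of_tendsto_atTop {b : ℝ} (hf : Differentiable ℝ f)
    (hf' : Differentiable ℝ (deriv f)) (hC : 0 ≤ C)
    (hbound : ∀ x, deriv (deriv f) x ≤ C * deriv f x)
    (hb : Tendsto f atTop (𝓝 b)) (x : ℝ) : 0 ≤ deriv f x := by
  have hshift : Tendsto (fun y : ℝ ↦ y + 1) atTop atTop :=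
    tendsto_atTop_add_const_right _ _ tendsto_id
  obtain ⟨ξ, hξ, hderiv⟩ := exists_mem_Ioo_tendsto_deriv_zero hf hshift hb
  have hξ_atTop : Tendsto ξ atTop atTop := tendsto_atTop_mono (fun y ↦ (hξ y).1.le) tendsto_id
  have hexp : ∀ᶠ y in atTop, |Real.exp (-C * ξ y)| ≤ 1 := by
    filter_upwards [hξ_atTop.eventually_ge_atTop 0] with y hy
    rw [Real.abs_exp, Real.exp_le_one_iff]
    exact mul_nonpos_of_nonpos_of_nonneg (neg_nonpos.2 hC) hy
  have hlim : Tendsto (fun y ↦ Real.exp (-C * ξ y) * deriv f (ξ y)) atTop (𝓝 0) :=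
    bdd_le_mul_tendsto_zero' 1 hexp hderiv
  have hnonneg : 0 ≤ Real.exp (-C * x) * deriv f x :=
    le_of_tendsto hlim <| (hξ_atTop.eventually_ge_atTop x).mono fun _ hy ↦
      antitone_exp_neg_mul_mul hf' hbound hy
  exact nonneg_of_mul_nonneg_right hnonneg (Real.exp_pos _)

lemma deriv_le_const_mul_sub_of_tendsto {a b : ℝ} (hf : Differentiable ℝ f)
    (hf' : Differentiable ℝ (deriv f)) (hC : 0 ≤ C)
    (hbound : ∀ x, deriv (deriv f) x ≤ C * deriv f x)
    (ha : Tendsto f atBot (𝓝 a)) (hb : Tendsto f atTop (𝓝 b)) (x : ℝ) :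
    deriv f x ≤ C * (b - a) := by
  have hmono : Monotone f :=
    monotone_of_deriv_nonneg hf (deriv_nonneg_of_tendsto_atTop hf hf' hC hbound hb)
  calc
    deriv f x ≤ C * (f x - a) := deriv_le_const_mul_sub_of_tendsto_atBot hf hf' hbound ha x
    _ ≤ C * (b - a) := by
      gcongr
      exact hmono.ge_of_tendsto hb x

theorem stmt3_general {lam T t a b : ℝ} (hf : Differentiable ℝ f)
    (hf' : Differentiable ℝ (deriv f)) (hC : 0 ≤ C)
    (hbound : ∀ x, deriv (deriv f) x ≤ C * deriv f x)
    (ha : Tendsto f atBot (𝓝 a)) (hb : Tendsto f atTop (𝓝 b))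
    (hba : b - a = 2 * lam * (T - t)) (ρ : ℝ) :
    deriv f ρ ≤ C * Real.exp 1 * lam * (T - t) := by
  have hle : deriv f ρ ≤ 2 * (C * lam * (T - t)) := by
    calc
      deriv f ρ ≤ C * (b - a) := deriv_le_const_mul_sub_of_tendsto hf hf' hC hbound ha hb ρ
      _ = 2 * (C * lam * (T - t)) := by rw [hba]; ring
  have hnonneg : 0 ≤ C * lam * (T - t) := by
    linarith [deriv_nonneg_of_tendsto_atTop hf hf' hC hbound hb ρ]
  calc
    deriv f ρ ≤ 2 * (C * lam * (T - t)) := hle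
    _ ≤ Real.exp 1 * (C * lam * (T - t)) := by
      gcongr
      exact Real.exp_one_gt_two.le
    _ = C * Real.exp 1 * lam * (T - t) := by ring

end

/-- Part (3) of Lemma 5.2 (est_2) at a time slice: if `f' > 0`, `f → a` at `−∞`,
`f → b` at `+∞` with `b − a = 2λ(T − t)`, and `|f''/f'| ≤ C`, then
`f' ≤ C·e·λ·(T − t)` everywhere. -/
theorem stmt3 (lam T C t a b : ℝ) (hlam : 0 < lam) (hT : 0 < T) (hC : 0 < C)
    (ht : t ∈ Set.Ico 0 T) (f : ℝ → ℝ)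
    (hf : Differentiable ℝ f) (hf' : Differentiable ℝ (deriv f))
    (hfpos : ∀ ρ, 0 < deriv f ρ)
    (ha : Filter.Tendsto f Filter.atBot (nhds a))
    (hb : Filter.Tendsto f Filter.atTop (nhds b))
    (hba : b - a = 2 * lam * (T - t))
    (hbound : ∀ ρ, |deriv (deriv f) ρ / deriv f ρ| ≤ C) :
    ∀ ρ : ℝ, deriv f ρ ≤ C * Real.exp 1 * lam * (T - t) := by
  exact stmt3_general hf hf' hC.le
    (fun ρ ↦ (div_le_iff₀ (hfpos ρ)).1 (le_of_abs_le (hbound ρ))) ha hb hba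
end

section
/- Fix an integer n ≥ 1 and reals ν ∈ ℝ, λ > 0. Let I ⊆ ℝ be an open interval and let f : ℝ × I → ℝ be C^∞ with f(ρ,t) > 0 and f_ρ(ρ,t) > 0 everywhere, satisfying ∂f/∂t = f_ρρ/f_ρ + n·f_ρ/f − ν/λ on ℝ × I. Suppose (ρ₀, t₀) ∈ ℝ × I is a point at which ∂/∂ρ (f_ρρ/f_ρ) = 0. Then at (ρ₀, t₀) one has f_ρρρ = f_ρρ²/f_ρ, and moreover (∂/∂t − (1/f_ρ)·∂²/∂ρ²)(f_ρρ/f_ρ) = 2n·f_ρ²/f³ − 2n·f_ρρ/f² at (ρ₀, t₀). -/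
open Set

/-- Partial derivative in the first (spatial) variable `ρ` of a function of `(ρ, t)`. -/
noncomputable def dRho (g : ℝ → ℝ → ℝ) : ℝ → ℝ → ℝ :=
  fun ρ t => deriv (fun s => g s t) ρ

/-!
Put `v = f_ρρ/f_ρ` and `w = f_ρ/f`, the logarithmic `ρ`-derivatives of `f_ρ` and `f`, so that the
equation reads `f_t = v + n w - ν/λ`. Commuting `∂_t` with `∂_ρ` gives
`f_ρ v_t = f_tρρ - v f_tρ`, and inserting the equation on the right,
`f_ρ v_t - v_ρρ = n (w_ρρ - v w_ρ) - v v_ρ`. Since `w_ρ = w (v - w)`, the bracket equals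
`w v_ρ - 2 w² (v - w)`. So all third derivatives of `f` on the right are carried by `v_ρ`, which
vanishes at the critical point.
-/

open Filter Topology

section LogDeriv

variable {𝕜 : Type*} [NontriviallyNormedField 𝕜] {u : 𝕜 → 𝕜} {x : 𝕜}

lemma contDiffAt_logDeriv {m n : WithTop ℕ∞} (hu : ContDiffAt 𝕜 n u x) (hmn : m + 1 ≤ n)
    (hx : u x ≠ 0) : ContDiffAt 𝕜 m (logDeriv u) x :=
  (hu.derivWithin hmn).div (hu.of_le (le_self_add.trans hmn)) hx

lemma deriv_logDeriv (hu : DifferentiableAt 𝕜 u x) (hu' : DifferentiableAt 𝕜 (deriv u) x)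
    (hx : u x ≠ 0) :
    deriv (logDeriv u) x = deriv (deriv u) x / u x - logDeriv u x ^ 2 := by
  rw [logDeriv, deriv_div hu' hu hx, Pi.div_apply]
  field_simp

lemma deriv_logDeriv_eq_mul (hu : DifferentiableAt 𝕜 u x) (hu' : DifferentiableAt 𝕜 (deriv u) x)
    (hx : u x ≠ 0) (hx' : deriv u x ≠ 0) :
    deriv (logDeriv u) x = logDeriv u x * (logDeriv (deriv u) x - logDeriv u x) := by
  rw [deriv_logDeriv hu hu' hx, logDeriv_apply, logDeriv_apply]
  field_simp

lemma deriv_deriv_eq_of_deriv_logDeriv_eq_zero (hu : DifferentiableAt 𝕜 u x)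
    (hu' : DifferentiableAt 𝕜 (deriv u) x) (hx : u x ≠ 0) (hcrit : deriv (logDeriv u) x = 0) :
    deriv (deriv u) x = deriv u x ^ 2 / u x := by
  rw [deriv_logDeriv hu hu' hx, sub_eq_zero, logDeriv_apply, div_eq_iff hx] at hcrit
  rw [hcrit]
  field_simp

lemma deriv_deriv_logDeriv (hu : ContDiffAt 𝕜 3 u x) (hx : u x ≠ 0) (hx' : deriv u x ≠ 0) :
    deriv (deriv (logDeriv u)) x
      = deriv (logDeriv u) x * (logDeriv (deriv u) x - logDeriv u x)
        + logDeriv u x * (deriv (logDeriv (deriv u)) x - deriv (logDeriv u) x) := by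
  have hu' : ContDiffAt 𝕜 2 (deriv u) x := hu.derivWithin (by norm_num)
  have hw : DifferentiableAt 𝕜 (logDeriv u) x :=
    (contDiffAt_logDeriv (m := 1) hu (by norm_num) hx).differentiableAt one_ne_zero
  have hv : DifferentiableAt 𝕜 (logDeriv (deriv u)) x :=
    (contDiffAt_logDeriv (m := 1) hu' (by norm_num) hx').differentiableAt one_ne_zero
  have hw' : deriv (logDeriv u) =ᶠ[𝓝 x] logDeriv u * (logDeriv (deriv u) - logDeriv u) := by
    filter_upwards [hu.eventually (by simp), hu'.eventually (by simp),
      hu.continuousAt.eventually_ne hx, hu'.continuousAt.eventually_ne hx'] with y hy hy' hy0 hy0'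
    exact deriv_logDeriv_eq_mul (hy.differentiableAt (by simp)) (hy'.differentiableAt (by simp))
      hy0 hy0'
  rw [hw'.deriv_eq, deriv_mul hw (hv.sub hw), deriv_sub hv hw, Pi.sub_apply]

lemma deriv_deriv_logDeriv_sub_mul (hu : ContDiffAt 𝕜 3 u x) (hx : u x ≠ 0)
    (hx' : deriv u x ≠ 0) :
    deriv (deriv (logDeriv u)) x - logDeriv (deriv u) x * deriv (logDeriv u) x
      = logDeriv u x * (deriv (logDeriv (deriv u)) x
        - 2 * logDeriv u x * (logDeriv (deriv u) x - logDeriv u x)) := by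
  have hu' : ContDiffAt 𝕜 2 (deriv u) x := hu.derivWithin (by norm_num)
  rw [deriv_deriv_logDeriv hu hx hx', deriv_logDeriv_eq_mul (hu.differentiableAt (by simp))
    (hu'.differentiableAt (by simp)) hx hx']
  ring

lemma deriv_deriv_add_const_mul_sub_const {v w : 𝕜 → 𝕜} (a κ : 𝕜) (hv : ContDiffAt 𝕜 2 v x)
    (hw : ContDiffAt 𝕜 2 w x) :
    deriv (deriv fun y => v y + a * w y - κ) x = deriv (deriv v) x + a * deriv (deriv w) x := by
  have haw : ContDiffAt 𝕜 2 (fun y => a * w y) x := contDiffAt_const.mul hw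
  simpa only [iteratedDeriv_succ, iteratedDeriv_zero, deriv_sub_const_fun] using
    (iteratedDeriv_fun_add (n := 2) hv haw).trans
      (congrArg _ (iteratedDeriv_const_mul_field (n := 2) a w))

lemma deriv_deriv_sub_mul_deriv_of_eventuallyEq {F : 𝕜 → 𝕜} {a κ : 𝕜} (hu : ContDiffAt 𝕜 3 u x)
    (hF : ContDiffAt 𝕜 2 F x) (hx : u x ≠ 0) (hx' : deriv u x ≠ 0)
    (hFu : F =ᶠ[𝓝 x] fun y => logDeriv (deriv u) y + a * logDeriv u y - κ) :
    deriv (deriv F) x - logDeriv (deriv u) x * deriv F x - deriv (deriv (logDeriv (deriv u))) x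
      = a * logDeriv u x * (deriv (logDeriv (deriv u)) x
          - 2 * logDeriv u x * (logDeriv (deriv u) x - logDeriv u x))
        - logDeriv (deriv u) x * deriv (logDeriv (deriv u)) x := by
  have hw : ContDiffAt 𝕜 2 (logDeriv u) x := contDiffAt_logDeriv hu (by norm_num) hx
  -- For a `C³` function `u` this is one derivative too many; it is gained from the equation `hFu`.
  have hv : ContDiffAt 𝕜 2 (logDeriv (deriv u)) x := by
    refine ((hF.sub (contDiffAt_const.mul hw)).add contDiffAt_const).congr_of_eventuallyEq
      (f := fun y => F y - a * logDeriv u y + κ) ?_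
    filter_upwards [hFu] with y hy
    rw [hy]
    ring
  have hF' : deriv F x = deriv (logDeriv (deriv u)) x + a * deriv (logDeriv u) x := by
    have hv₁ := hv.differentiableAt two_ne_zero
    have hw₁ := hw.differentiableAt two_ne_zero
    rw [hFu.deriv_eq, deriv_sub_const, deriv_fun_add hv₁ (hw₁.const_mul a), deriv_const_mul a hw₁]
  have hF'' : deriv (deriv F) x
      = deriv (deriv (logDeriv (deriv u))) x + a * deriv (deriv (logDeriv u)) x := by
    rw [hFu.deriv.deriv_eq, deriv_deriv_add_const_mul_sub_const a κ hv hw]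
  rw [hF', hF'']
  linear_combination a * deriv_deriv_logDeriv_sub_mul hu hx hx'

end LogDeriv

/-- Partial derivative in the second (time) variable `t` of a function of `(ρ, t)`; the companion
of `dRho`. -/
noncomputable def dTime (g : ℝ → ℝ → ℝ) : ℝ → ℝ → ℝ :=
  fun ρ t => deriv (fun τ => g ρ τ) t

/-- Logarithmic spatial derivative `g_ρ / g`. The quantity `f_ρρ / f_ρ` is `dRhoLog (dRho f)`, and
on a time slice `dRhoLog` is definitionally Mathlib's `logDeriv`. -/
noncomputable def dRhoLog (g : ℝ → ℝ → ℝ) : ℝ → ℝ → ℝ :=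
  fun ρ t => dRho g ρ t / g ρ t

section PartialDerivatives

variable {g : ℝ → ℝ → ℝ} {ρ t : ℝ}

lemma hasDerivAt_fst_of_uncurry (hg : DifferentiableAt ℝ (Function.uncurry g) (ρ, t)) :
    HasDerivAt (fun s => g s t) (fderiv ℝ (Function.uncurry g) (ρ, t) (1, 0)) ρ :=
  hg.hasFDerivAt.comp_hasDerivAt (f := fun s => (s, t)) ρ
    ((hasDerivAt_id ρ).prodMk (hasDerivAt_const ρ t))

lemma hasDerivAt_snd_of_uncurry (hg : DifferentiableAt ℝ (Function.uncurry g) (ρ, t)) :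
    HasDerivAt (fun τ => g ρ τ) (fderiv ℝ (Function.uncurry g) (ρ, t) (0, 1)) t :=
  hg.hasFDerivAt.comp_hasDerivAt (f := fun τ => (ρ, τ)) t
    ((hasDerivAt_const t ρ).prodMk (hasDerivAt_id t))

lemma uncurry_dRho_eventuallyEq (hg : ContDiffAt ℝ 1 (Function.uncurry g) (ρ, t)) :
    Function.uncurry (dRho g) =ᶠ[𝓝 (ρ, t)] fun p => fderiv ℝ (Function.uncurry g) p (1, 0) := by
  filter_upwards [hg.eventually (by simp)] with p hp
  exact (hasDerivAt_fst_of_uncurry (hp.differentiableAt one_ne_zero)).deriv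

lemma uncurry_dTime_eventuallyEq (hg : ContDiffAt ℝ 1 (Function.uncurry g) (ρ, t)) :
    Function.uncurry (dTime g) =ᶠ[𝓝 (ρ, t)] fun p => fderiv ℝ (Function.uncurry g) p (0, 1) := by
  filter_upwards [hg.eventually (by simp)] with p hp
  exact (hasDerivAt_snd_of_uncurry (hp.differentiableAt one_ne_zero)).deriv

lemma contDiffAt_uncurry_dRho {m n : WithTop ℕ∞} (hg : ContDiffAt ℝ n (Function.uncurry g) (ρ, t))
    (hmn : m + 1 ≤ n) : ContDiffAt ℝ m (Function.uncurry (dRho g)) (ρ, t) :=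
  ((hg.fderiv_right hmn).clm_apply contDiffAt_const).congr_of_eventuallyEq
    (uncurry_dRho_eventuallyEq (hg.of_le (le_add_self.trans hmn)))

lemma contDiffAt_uncurry_dTime {m n : WithTop ℕ∞}
    (hg : ContDiffAt ℝ n (Function.uncurry g) (ρ, t)) (hmn : m + 1 ≤ n) :
    ContDiffAt ℝ m (Function.uncurry (dTime g)) (ρ, t) :=
  ((hg.fderiv_right hmn).clm_apply contDiffAt_const).congr_of_eventuallyEq
    (uncurry_dTime_eventuallyEq (hg.of_le (le_add_self.trans hmn)))

lemma contDiffAt_fst_of_uncurry {n : WithTop ℕ∞}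
    (hg : ContDiffAt ℝ n (Function.uncurry g) (ρ, t)) : ContDiffAt ℝ n (fun s => g s t) ρ :=
  hg.comp (f := fun s => (s, t)) ρ (contDiffAt_id.prodMk contDiffAt_const)

lemma dTime_dRho_comm (hg : ContDiffAt ℝ 2 (Function.uncurry g) (ρ, t)) :
    dTime (dRho g) ρ t = dRho (dTime g) ρ t := by
  have hg₁ : ContDiffAt ℝ 1 (Function.uncurry g) (ρ, t) := hg.of_le one_le_two
  have hfderiv : DifferentiableAt ℝ (fderiv ℝ (Function.uncurry g)) (ρ, t) :=
    (hg.fderiv_right (m := 1) (by norm_num)).differentiableAt one_ne_zero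
  have hdRho : DifferentiableAt ℝ (Function.uncurry (dRho g)) (ρ, t) :=
    (contDiffAt_uncurry_dRho (m := 1) hg (by norm_num)).differentiableAt one_ne_zero
  have hdTime : DifferentiableAt ℝ (Function.uncurry (dTime g)) (ρ, t) :=
    (contDiffAt_uncurry_dTime (m := 1) hg (by norm_num)).differentiableAt one_ne_zero
  have hsymm : IsSymmSndFDerivAt ℝ (Function.uncurry g) (ρ, t) := hg.isSymmSndFDerivAt (by simp)
  calc dTime (dRho g) ρ t
      = fderiv ℝ (Function.uncurry (dRho g)) (ρ, t) (0, 1) :=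
        (hasDerivAt_snd_of_uncurry hdRho).deriv
    _ = fderiv ℝ (fderiv ℝ (Function.uncurry g)) (ρ, t) (0, 1) (1, 0) := by
        simp [(uncurry_dRho_eventuallyEq hg₁).fderiv_eq, fderiv_clm_apply hfderiv]
    _ = fderiv ℝ (fderiv ℝ (Function.uncurry g)) (ρ, t) (1, 0) (0, 1) := hsymm _ _
    _ = fderiv ℝ (Function.uncurry (dTime g)) (ρ, t) (1, 0) := by
        simp [(uncurry_dTime_eventuallyEq hg₁).fderiv_eq, fderiv_clm_apply hfderiv]
    _ = dRho (dTime g) ρ t := (hasDerivAt_fst_of_uncurry hdTime).deriv.symm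

lemma dRho_dTime_dRho_comm (hg : ContDiffAt ℝ 3 (Function.uncurry g) (ρ, t)) :
    dRho (dTime (dRho g)) ρ t = dRho (dRho (dTime g)) ρ t := by
  have hline : Tendsto (fun s => (s, t)) (𝓝 ρ) (𝓝 (ρ, t)) :=
    (Continuous.prodMk_left t).continuousAt
  have hg₂ : ContDiffAt ℝ 2 (Function.uncurry g) (ρ, t) := hg.of_le (by norm_num)
  refine EventuallyEq.deriv_eq ?_
  filter_upwards [hline.eventually (hg₂.eventually (by simp))] with s hs
  exact dTime_dRho_comm hs

lemma dTime_dRhoLog (hg : ContDiffAt ℝ 2 (Function.uncurry g) (ρ, t)) (h0 : g ρ t ≠ 0) :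
    dTime (dRhoLog g) ρ t = (dRho (dTime g) ρ t - dRhoLog g ρ t * dTime g ρ t) / g ρ t := by
  have hgt : DifferentiableAt ℝ (fun τ => g ρ τ) t :=
    (hasDerivAt_snd_of_uncurry (hg.differentiableAt two_ne_zero)).differentiableAt
  have hgρt : DifferentiableAt ℝ (fun τ => dRho g ρ τ) t :=
    (hasDerivAt_snd_of_uncurry ((contDiffAt_uncurry_dRho (m := 1) hg
      (by norm_num)).differentiableAt one_ne_zero)).differentiableAt
  rw [← dTime_dRho_comm hg]
  simp only [dTime, dRhoLog, deriv_fun_div hgρt hgt h0]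
  field_simp

lemma dTime_dRhoLog_dRho (hg : ContDiffAt ℝ 3 (Function.uncurry g) (ρ, t))
    (h0 : dRho g ρ t ≠ 0) :
    dTime (dRhoLog (dRho g)) ρ t
      = (dRho (dRho (dTime g)) ρ t - dRhoLog (dRho g) ρ t * dRho (dTime g) ρ t)
        / dRho g ρ t := by
  rw [dTime_dRhoLog (contDiffAt_uncurry_dRho hg (by norm_num)) h0, dRho_dTime_dRho_comm hg,
    dTime_dRho_comm (hg.of_le (by norm_num))]

lemma dRho_dRho_eq_of_dRho_dRhoLog_eq_zero
    (hg : ContDiffAt ℝ 2 (Function.uncurry g) (ρ, t)) (h0 : g ρ t ≠ 0)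
    (hcrit : dRho (dRhoLog g) ρ t = 0) :
    dRho (dRho g) ρ t = dRho g ρ t ^ 2 / g ρ t :=
  have hgρ : ContDiffAt ℝ 1 (Function.uncurry (dRho g)) (ρ, t) :=
    contDiffAt_uncurry_dRho hg (by norm_num)
  deriv_deriv_eq_of_deriv_logDeriv_eq_zero (u := fun s => g s t)
    ((contDiffAt_fst_of_uncurry hg).differentiableAt two_ne_zero)
    ((contDiffAt_fst_of_uncurry hgρ).differentiableAt one_ne_zero) h0 hcrit

end PartialDerivatives

section MomentumProfile

variable {a κ ρ₀ t₀ : ℝ} {f : ℝ → ℝ → ℝ}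

theorem dTime_sub_dRho_dRho_dRhoLog_dRho (hf : ContDiffAt ℝ 3 (Function.uncurry f) (ρ₀, t₀))
    (hf0 : f ρ₀ t₀ ≠ 0) (hfρ0 : dRho f ρ₀ t₀ ≠ 0)
    (hPDE : ∀ᶠ ρ in 𝓝 ρ₀, dTime f ρ t₀ = dRhoLog (dRho f) ρ t₀ + a * dRhoLog f ρ t₀ - κ) :
    dTime (dRhoLog (dRho f)) ρ₀ t₀
        - (1 / dRho f ρ₀ t₀) * dRho (dRho (dRhoLog (dRho f))) ρ₀ t₀
      = 2 * a * (dRho f ρ₀ t₀) ^ 2 / (f ρ₀ t₀) ^ 3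
        - 2 * a * dRho (dRho f) ρ₀ t₀ / (f ρ₀ t₀) ^ 2
        + (a / f ρ₀ t₀ - dRhoLog (dRho f) ρ₀ t₀ / dRho f ρ₀ t₀)
          * dRho (dRhoLog (dRho f)) ρ₀ t₀ := by
  have hspatial : dRho (dRho (dTime f)) ρ₀ t₀ - dRhoLog (dRho f) ρ₀ t₀ * dRho (dTime f) ρ₀ t₀
        - dRho (dRho (dRhoLog (dRho f))) ρ₀ t₀
      = a * dRhoLog f ρ₀ t₀ * (dRho (dRhoLog (dRho f)) ρ₀ t₀
          - 2 * dRhoLog f ρ₀ t₀ * (dRhoLog (dRho f) ρ₀ t₀ - dRhoLog f ρ₀ t₀))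
        - dRhoLog (dRho f) ρ₀ t₀ * dRho (dRhoLog (dRho f)) ρ₀ t₀ :=
    deriv_deriv_sub_mul_deriv_of_eventuallyEq (u := fun s => f s t₀) (F := fun s => dTime f s t₀)
      (contDiffAt_fst_of_uncurry hf)
      (contDiffAt_fst_of_uncurry (contDiffAt_uncurry_dTime hf (by norm_num))) hf0 hfρ0 hPDE
  rw [dTime_dRhoLog_dRho hf hfρ0, one_div_mul_eq_div, ← sub_div, hspatial]
  simp only [dRhoLog]
  field_simp
  ring

theorem stmt5_general (hf : ContDiffAt ℝ 3 (Function.uncurry f) (ρ₀, t₀))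
    (hf0 : f ρ₀ t₀ ≠ 0) (hfρ0 : dRho f ρ₀ t₀ ≠ 0)
    (hPDE : ∀ᶠ ρ in 𝓝 ρ₀, deriv (fun τ => f ρ τ) t₀
      = dRho (dRho f) ρ t₀ / dRho f ρ t₀ + a * dRho f ρ t₀ / f ρ t₀ - κ)
    (hcrit : deriv (fun s => dRho (dRho f) s t₀ / dRho f s t₀) ρ₀ = 0) :
    dRho (dRho (dRho f)) ρ₀ t₀ = (dRho (dRho f) ρ₀ t₀) ^ 2 / dRho f ρ₀ t₀ ∧
    deriv (fun τ => dRho (dRho f) ρ₀ τ / dRho f ρ₀ τ) t₀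
        - (1 / dRho f ρ₀ t₀)
          * deriv (fun s => deriv (fun u => dRho (dRho f) u t₀ / dRho f u t₀) s) ρ₀
      = 2 * a * (dRho f ρ₀ t₀) ^ 2 / (f ρ₀ t₀) ^ 3
        - 2 * a * dRho (dRho f) ρ₀ t₀ / (f ρ₀ t₀) ^ 2 := by
  simp only [mul_div_assoc a] at hPDE
  have hcrit' : dRho (dRhoLog (dRho f)) ρ₀ t₀ = 0 := hcrit
  have hevolution := dTime_sub_dRho_dRho_dRhoLog_dRho hf hf0 hfρ0 hPDE
  rw [hcrit', mul_zero, add_zero] at hevolution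
  exact ⟨dRho_dRho_eq_of_dRho_dRhoLog_eq_zero (contDiffAt_uncurry_dRho hf (by norm_num)) hfρ0
    hcrit', hevolution⟩

end MomentumProfile

/-- The key cancellation identity at a spatial critical point of `f_ρρ/f_ρ` used in the
maximum-principle argument proving part (2) of Lemma 5.2 (est_2): at a point where
`∂/∂ρ (f_ρρ/f_ρ) = 0` one has `f_ρρρ = f_ρρ²/f_ρ` and
`(∂/∂t − (1/f_ρ)·∂²/∂ρ²)(f_ρρ/f_ρ) = 2n·f_ρ²/f³ − 2n·f_ρρ/f²`. -/
theorem stmt5 (n : ℕ) (hn : 1 ≤ n) (ν lam : ℝ) (hlam : 0 < lam)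
    (c d : ℝ) (f : ℝ → ℝ → ℝ)
    (hf : ContDiffOn ℝ (⊤ : ℕ∞) (fun p : ℝ × ℝ => f p.1 p.2) (univ ×ˢ Ioo c d))
    (hfpos : ∀ ρ t, t ∈ Ioo c d → 0 < f ρ t)
    (hfρpos : ∀ ρ t, t ∈ Ioo c d → 0 < dRho f ρ t)
    (hPDE : ∀ ρ t, t ∈ Ioo c d →
      deriv (fun τ => f ρ τ) t
        = dRho (dRho f) ρ t / dRho f ρ t + n * dRho f ρ t / f ρ t - ν / lam)
    (ρ₀ t₀ : ℝ) (ht₀ : t₀ ∈ Ioo c d)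
    (hcrit : deriv (fun s => dRho (dRho f) s t₀ / dRho f s t₀) ρ₀ = 0) :
    dRho (dRho (dRho f)) ρ₀ t₀ = (dRho (dRho f) ρ₀ t₀) ^ 2 / dRho f ρ₀ t₀ ∧
    deriv (fun τ => dRho (dRho f) ρ₀ τ / dRho f ρ₀ τ) t₀
        - (1 / dRho f ρ₀ t₀)
          * deriv (fun s => deriv (fun u => dRho (dRho f) u t₀ / dRho f u t₀) s) ρ₀
      = 2 * n * (dRho f ρ₀ t₀) ^ 2 / (f ρ₀ t₀) ^ 3
        - 2 * n * dRho (dRho f) ρ₀ t₀ / (f ρ₀ t₀) ^ 2 := by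
  have hnhds : univ ×ˢ Ioo c d ∈ 𝓝 (ρ₀, t₀) :=
    (isOpen_univ.prod isOpen_Ioo).mem_nhds ⟨mem_univ ρ₀, ht₀⟩
  exact stmt5_general ((hf.contDiffAt hnhds).of_le (by norm_cast))
    (hfpos ρ₀ t₀ ht₀).ne' (hfρpos ρ₀ t₀ ht₀).ne' (.of_forall fun ρ => hPDE ρ t₀ ht₀) hcrit
end

section
/- Fix an integer n ≥ 1, reals ν ∈ ℝ, λ > 0, and T > 0. Let f : ℝ × [0, T) → ℝ be C^∞ with f > 0 and f_ρ > 0 everywhere, satisfying ∂f/∂t = f_ρρ/f_ρ + n·f_ρ/f − ν/λ. Let 0 < ε < T and suppose there exists (ρ*, t*) ∈ ℝ × [0, T − ε] at which the function f_ρρ/f_ρ attains its supremum over ℝ × [0, T − ε]. Then (f_ρρ/f_ρ)(ρ*, t*) ≤ max( sup_{σ ∈ ℝ} (f_ρρ/f_ρ)(σ, 0), (f_ρ/f)(ρ*, t*) ). In particular, if C₀ > 1 satisfies f ≥ C₀⁻¹ and f_ρ ≤ C₀ on ℝ × [0, T), then f_ρρ/f_ρ ≤ max( sup_{σ ∈ ℝ}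 (f_ρρ/f_ρ)(σ, 0), C₀² ) everywhere on ℝ × [0, T − ε]. -/
open Set

/-!
Write `p = f_ρ / f` and `q = f_ρρ / f_ρ` for the logarithmic `ρ`-derivatives of `f` and of `f_ρ`.
Differentiating the equation `f_t = q + n p - c` twice in `ρ` and using `p_ρ = p (q - p)` gives
`f_ρ q_t = q_ρρ + (n p - q) q_ρ - 2 n p² (q - p)`.
At a spatial maximum of `q` at a positive time which is also a maximum among earlier times,
`q_ρ = 0`, `q_ρρ ≤ 0` and `q_t ≥ 0`, so the zeroth-order term forces `q ≤ p`. If instead `q` is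
maximal at time `0`, it is bounded by its initial supremum.
-/

open Filter Function Topology

/-- Partial derivative in the second (time) variable `t` of a function of `(ρ, t)`. -/
noncomputable def dTau (g : ℝ → ℝ → ℝ) : ℝ → ℝ → ℝ :=
  fun ρ t => deriv (fun τ => g ρ τ) t

/-- Logarithmic derivative `g_ρ / g` in the first variable; it takes the junk value `0` where `g`
vanishes. For a momentum profile `f`, the quantity `f_ρρ / f_ρ` is `logDRho (dRho f)`. -/
noncomputable def logDRho (g : ℝ → ℝ → ℝ) : ℝ → ℝ → ℝ :=
  fun ρ t => dRho g ρ t / g ρ t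

/-- The momentum-profile evolution equation `f_t = f_ρρ / f_ρ + n f_ρ / f - c` at the point
`(ρ, t)`. The constant `c` is `ν / λ` for the equation of the paper, and `n` may be real. -/
def MomentumProfileEq (n c : ℝ) (f : ℝ → ℝ → ℝ) (ρ t : ℝ) : Prop :=
  dTau f ρ t = logDRho (dRho f) ρ t + n * logDRho f ρ t - c

section PartialDerivatives

variable {g h : ℝ → ℝ → ℝ} {ρ t : ℝ} {k m : WithTop ℕ∞}

lemma hasDerivAt_dRho_fderiv (hg : DifferentiableAt ℝ (uncurry g) (ρ, t)) :
    HasDerivAt (fun s => g s t) (fderiv ℝ (uncurry g) (ρ, t) (1, 0)) ρ :=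
  hg.hasFDerivAt.comp_hasDerivAt (f := fun s => (s, t)) ρ
    ((hasDerivAt_id ρ).prodMk (hasDerivAt_const ρ t))

lemma hasDerivAt_dTau_fderiv (hg : DifferentiableAt ℝ (uncurry g) (ρ, t)) :
    HasDerivAt (fun τ => g ρ τ) (fderiv ℝ (uncurry g) (ρ, t) (0, 1)) t :=
  hg.hasFDerivAt.comp_hasDerivAt t ((hasDerivAt_const t ρ).prodMk (hasDerivAt_id t))

lemma hasDerivAt_dRho (hg : DifferentiableAt ℝ (uncurry g) (ρ, t)) :
    HasDerivAt (fun s => g s t) (dRho g ρ t) ρ :=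
  (hasDerivAt_dRho_fderiv hg).differentiableAt.hasDerivAt

lemma hasDerivAt_dTau (hg : DifferentiableAt ℝ (uncurry g) (ρ, t)) :
    HasDerivAt (fun τ => g ρ τ) (dTau g ρ t) t :=
  (hasDerivAt_dTau_fderiv hg).differentiableAt.hasDerivAt

lemma eventually_differentiableAt (hg : ContDiffAt ℝ 1 (uncurry g) (ρ, t)) :
    ∀ᶠ z in 𝓝 (ρ, t), DifferentiableAt ℝ (uncurry g) z :=
  (hg.eventually (by simp)).mono fun _ hz => hz.differentiableAt one_ne_zero

lemma dRho_eventuallyEq_fderiv (hg : ContDiffAt ℝ 1 (uncurry g) (ρ, t)) :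
    uncurry (dRho g) =ᶠ[𝓝 (ρ, t)] fun z => fderiv ℝ (uncurry g) z (1, 0) :=
  (eventually_differentiableAt hg).mono fun _ hz => (hasDerivAt_dRho_fderiv hz).deriv

lemma dTau_eventuallyEq_fderiv (hg : ContDiffAt ℝ 1 (uncurry g) (ρ, t)) :
    uncurry (dTau g) =ᶠ[𝓝 (ρ, t)] fun z => fderiv ℝ (uncurry g) z (0, 1) :=
  (eventually_differentiableAt hg).mono fun _ hz => (hasDerivAt_dTau_fderiv hz).deriv

lemma contDiffAt_dRho (hg : ContDiffAt ℝ k (uncurry g) (ρ, t)) (hmk : m + 1 ≤ k) :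
    ContDiffAt ℝ m (uncurry (dRho g)) (ρ, t) :=
  ((hg.fderiv_right hmk).clm_apply contDiffAt_const).congr_of_eventuallyEq
    (dRho_eventuallyEq_fderiv (hg.of_le (le_add_self.trans hmk)))

lemma contDiffAt_dTau (hg : ContDiffAt ℝ k (uncurry g) (ρ, t)) (hmk : m + 1 ≤ k) :
    ContDiffAt ℝ m (uncurry (dTau g)) (ρ, t) :=
  ((hg.fderiv_right hmk).clm_apply contDiffAt_const).congr_of_eventuallyEq
    (dTau_eventuallyEq_fderiv (hg.of_le (le_add_self.trans hmk)))

lemma dTau_dRho_comm (hg : ContDiffAt ℝ 2 (uncurry g) (ρ, t)) :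
    dTau (dRho g) ρ t = dRho (dTau g) ρ t := by
  have hg₁ : ContDiffAt ℝ 1 (uncurry g) (ρ, t) := hg.of_le one_le_two
  have hρ : ContDiffAt ℝ 1 (uncurry (dRho g)) (ρ, t) := contDiffAt_dRho hg one_add_one_eq_two.le
  have hτ : ContDiffAt ℝ 1 (uncurry (dTau g)) (ρ, t) := contDiffAt_dTau hg one_add_one_eq_two.le
  have hD : DifferentiableAt ℝ (fderiv ℝ (uncurry g)) (ρ, t) :=
    (hg.fderiv_right one_add_one_eq_two.le).differentiableAt one_ne_zero
  have hsymm : IsSymmSndFDerivAt ℝ (uncurry g) (ρ, t) := hg.isSymmSndFDerivAt (by simp)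
  calc dTau (dRho g) ρ t
      = fderiv ℝ (uncurry (dRho g)) (ρ, t) (0, 1) :=
        (hasDerivAt_dTau_fderiv (hρ.differentiableAt one_ne_zero)).deriv
    _ = fderiv ℝ (fderiv ℝ (uncurry g)) (ρ, t) (0, 1) (1, 0) := by
        rw [(dRho_eventuallyEq_fderiv hg₁).fderiv_eq,
          fderiv_clm_apply hD (differentiableAt_const _)]
        simp
    _ = fderiv ℝ (fderiv ℝ (uncurry g)) (ρ, t) (1, 0) (0, 1) := hsymm _ _
    _ = fderiv ℝ (uncurry (dTau g)) (ρ, t) (1, 0) := by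
        rw [(dTau_eventuallyEq_fderiv hg₁).fderiv_eq,
          fderiv_clm_apply hD (differentiableAt_const _)]
        simp
    _ = dRho (dTau g) ρ t :=
        (hasDerivAt_dRho_fderiv (hτ.differentiableAt one_ne_zero)).deriv.symm

lemma dRho_eventuallyEq (hgh : uncurry g =ᶠ[𝓝 (ρ, t)] uncurry h) :
    uncurry (dRho g) =ᶠ[𝓝 (ρ, t)] uncurry (dRho h) := by
  filter_upwards [hgh.eventually_nhds] with ⟨σ, τ⟩ hστ
  have hline : Tendsto (fun s => (s, τ)) (𝓝 σ) (𝓝 (σ, τ)) :=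
    (Continuous.prodMk_left τ).tendsto σ
  have hslice : (fun s => g s τ) =ᶠ[𝓝 σ] fun s => h s τ := hline.eventually hστ
  exact hslice.deriv_eq

end PartialDerivatives

section LogarithmicDerivative

variable {g : ℝ → ℝ → ℝ} {ρ t : ℝ} {k m : WithTop ℕ∞}

lemma contDiffAt_logDRho (hg : ContDiffAt ℝ k (uncurry g) (ρ, t)) (hmk : m + 1 ≤ k)
    (hg₀ : g ρ t ≠ 0) : ContDiffAt ℝ m (uncurry (logDRho g)) (ρ, t) :=
  (contDiffAt_dRho hg hmk).div (hg.of_le (le_self_add.trans hmk)) hg₀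

lemma dRho_logDRho (hg : DifferentiableAt ℝ (uncurry g) (ρ, t))
    (hg' : DifferentiableAt ℝ (uncurry (dRho g)) (ρ, t)) (hg₀ : g ρ t ≠ 0)
    (hg₁ : dRho g ρ t ≠ 0) :
    dRho (logDRho g) ρ t = logDRho g ρ t * (logDRho (dRho g) ρ t - logDRho g ρ t) := by
  have hquot : dRho (logDRho g) ρ t = _ :=
    ((hasDerivAt_dRho hg').div (hasDerivAt_dRho hg) hg₀).deriv
  rw [hquot]
  simp only [logDRho]
  field_simp

lemma dTau_logDRho (hg : ContDiffAt ℝ 2 (uncurry g) (ρ, t)) (hg₀ : g ρ t ≠ 0) :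
    dTau (logDRho g) ρ t = (dRho (dTau g) ρ t - logDRho g ρ t * dTau g ρ t) / g ρ t := by
  have hg' : ContDiffAt ℝ 1 (uncurry (dRho g)) (ρ, t) := contDiffAt_dRho hg one_add_one_eq_two.le
  have hquot : dTau (logDRho g) ρ t = _ :=
    ((hasDerivAt_dTau (hg'.differentiableAt one_ne_zero)).div
      (hasDerivAt_dTau (hg.differentiableAt two_ne_zero)) hg₀).deriv
  rw [hquot, dTau_dRho_comm hg]
  simp only [logDRho]
  field_simp

end LogarithmicDerivative

section MaximumConditions

variable {w : ℝ → ℝ} {x : ℝ}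

lemma deriv_deriv_nonpos_of_isLocalMax (hmax : IsLocalMax w x) (hw : ContinuousAt w x) :
    deriv (deriv w) x ≤ 0 := by
  by_contra! hpos
  have hmin : IsLocalMin w x := isLocalMin_of_deriv_deriv_pos hpos hmax.deriv_eq_zero hw
  have hconst : w =ᶠ[𝓝 x] fun _ => w x := by
    filter_upwards [hmin, hmax] with s hs hs' using le_antisymm hs' hs
  have hzero : deriv (deriv w) x = 0 := by simp [hconst.deriv.deriv_eq]
  exact hpos.ne' hzero

lemma nonneg_of_hasDerivAt_of_isLocalMaxOn_Iic {d : ℝ} (hmax : IsLocalMaxOn w (Iic x) x)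
    (hw : HasDerivAt w d x) : 0 ≤ d := by
  have hcone : (-1 : ℝ) ∈ posTangentConeAt (Iic x) x :=
    mem_posTangentConeAt_of_segment_subset
      ((convex_Iic x).segment_subset self_mem_Iic (by simp))
  simpa using hmax.hasFDerivWithinAt_nonpos hw.hasDerivWithinAt.hasFDerivWithinAt hcone

end MaximumConditions

section MomentumProfile

variable {f : ℝ → ℝ → ℝ} {n c ρ t : ℝ}

-- Three derivatives of `f` suffice: the equation itself makes `f_ρρ / f_ρ` twice differentiable.
lemma contDiffAt_logDRho_dRho (hf : ContDiffAt ℝ 3 (uncurry f) (ρ, t)) (hf₀ : f ρ t ≠ 0)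
    (hPDE : ∀ᶠ z in 𝓝 (ρ, t), MomentumProfileEq n c f z.1 z.2) :
    ContDiffAt ℝ 2 (uncurry (logDRho (dRho f))) (ρ, t) := by
  have hfτ : ContDiffAt ℝ 2 (uncurry (dTau f)) (ρ, t) := contDiffAt_dTau hf two_add_one_eq_three.le
  have hp : ContDiffAt ℝ 2 (uncurry (logDRho f)) (ρ, t) :=
    contDiffAt_logDRho hf two_add_one_eq_three.le hf₀
  have hsolved : uncurry (logDRho (dRho f)) =ᶠ[𝓝 (ρ, t)]
      fun z => dTau f z.1 z.2 - n * logDRho f z.1 z.2 + c := by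
    filter_upwards [hPDE] with z hz
    rw [hz, uncurry]
    ring
  exact ((hfτ.sub (contDiffAt_const.mul hp)).add contDiffAt_const).congr_of_eventuallyEq hsolved

lemma dTau_dRho_eventuallyEq (hf : ContDiffAt ℝ 3 (uncurry f) (ρ, t)) (hf₀ : f ρ t ≠ 0)
    (hf₁ : dRho f ρ t ≠ 0)
    (hPDE : ∀ᶠ z in 𝓝 (ρ, t), MomentumProfileEq n c f z.1 z.2) :
    uncurry (dTau (dRho f)) =ᶠ[𝓝 (ρ, t)] fun z => dRho (logDRho (dRho f)) z.1 z.2 +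
      n * (logDRho f z.1 z.2 * (logDRho (dRho f) z.1 z.2 - logDRho f z.1 z.2)) := by
  have hf' : ContDiffAt ℝ 2 (uncurry (dRho f)) (ρ, t) := contDiffAt_dRho hf two_add_one_eq_three.le
  have hp : ContDiffAt ℝ 2 (uncurry (logDRho f)) (ρ, t) :=
    contDiffAt_logDRho hf two_add_one_eq_three.le hf₀
  have hq : ContDiffAt ℝ 2 (uncurry (logDRho (dRho f))) (ρ, t) :=
    contDiffAt_logDRho_dRho hf hf₀ hPDE
  have hrhs : uncurry (dTau f) =ᶠ[𝓝 (ρ, t)]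
      uncurry fun σ τ => logDRho (dRho f) σ τ + n * logDRho f σ τ - c := hPDE
  filter_upwards [hf.eventually (by simp), eventually_differentiableAt (hf'.of_le one_le_two),
    eventually_differentiableAt (hq.of_le one_le_two),
    eventually_differentiableAt (hp.of_le one_le_two),
    hf.continuousAt.eventually_ne hf₀, hf'.continuousAt.eventually_ne hf₁,
    dRho_eventuallyEq hrhs] with ⟨σ, τ⟩ hfz hf'z hqz hpz hf₀z hf₁z hrhsz
  have hsum : dRho (fun σ τ => logDRho (dRho f) σ τ + n * logDRho f σ τ - c) σ τ =
      dRho (logDRho (dRho f)) σ τ + n * dRho (logDRho f) σ τ :=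
    (((hasDerivAt_dRho hqz).add ((hasDerivAt_dRho hpz).const_mul n)).sub_const c).deriv
  calc dTau (dRho f) σ τ
      = dRho (dTau f) σ τ := dTau_dRho_comm (hfz.of_le (by norm_num))
    _ = dRho (logDRho (dRho f)) σ τ + n * dRho (logDRho f) σ τ := hrhsz.trans hsum
    _ = _ := by rw [dRho_logDRho (hfz.differentiableAt three_ne_zero) hf'z hf₀z hf₁z]

lemma dTau_logDRho_dRho (hf : ContDiffAt ℝ 3 (uncurry f) (ρ, t)) (hf₀ : f ρ t ≠ 0)
    (hf₁ : dRho f ρ t ≠ 0)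
    (hPDE : ∀ᶠ z in 𝓝 (ρ, t), MomentumProfileEq n c f z.1 z.2) :
    dTau (logDRho (dRho f)) ρ t =
      (dRho (dRho (logDRho (dRho f))) ρ t
        + (n * logDRho f ρ t - logDRho (dRho f) ρ t) * dRho (logDRho (dRho f)) ρ t
        - 2 * n * logDRho f ρ t ^ 2 * (logDRho (dRho f) ρ t - logDRho f ρ t)) / dRho f ρ t := by
  have hf' : ContDiffAt ℝ 2 (uncurry (dRho f)) (ρ, t) := contDiffAt_dRho hf two_add_one_eq_three.le
  have hq := contDiffAt_logDRho_dRho hf hf₀ hPDE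
  have hq' : ContDiffAt ℝ 1 (uncurry (dRho (logDRho (dRho f)))) (ρ, t) :=
    contDiffAt_dRho hq one_add_one_eq_two.le
  have hp : ContDiffAt ℝ 2 (uncurry (logDRho f)) (ρ, t) :=
    contDiffAt_logDRho hf two_add_one_eq_three.le hf₀
  have hp_ρ := dRho_logDRho (hf.differentiableAt three_ne_zero)
    (hf'.differentiableAt two_ne_zero) hf₀ hf₁
  have hu_τ := dTau_dRho_eventuallyEq hf hf₀ hf₁ hPDE
  have dq := hasDerivAt_dRho (hq.differentiableAt two_ne_zero)
  have dq' := hasDerivAt_dRho (hq'.differentiableAt one_ne_zero)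
  have dp := hasDerivAt_dRho (hp.differentiableAt two_ne_zero)
  have hu_τρ : dRho (dTau (dRho f)) ρ t = dRho (dRho (logDRho (dRho f))) ρ t +
      n * (dRho (logDRho f) ρ t * (logDRho (dRho f) ρ t - logDRho f ρ t) +
        logDRho f ρ t * (dRho (logDRho (dRho f)) ρ t - dRho (logDRho f) ρ t)) :=
    (dRho_eventuallyEq (h := fun σ τ => dRho (logDRho (dRho f)) σ τ +
        n * (logDRho f σ τ * (logDRho (dRho f) σ τ - logDRho f σ τ))) hu_τ).eq_of_nhds.trans
      (dq'.add ((dp.mul (dq.sub dp)).const_mul n)).deriv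
  have hu_τ₀ : dTau (dRho f) ρ t = dRho (logDRho (dRho f)) ρ t +
      n * (logDRho f ρ t * (logDRho (dRho f) ρ t - logDRho f ρ t)) := hu_τ.eq_of_nhds
  rw [dTau_logDRho hf' hf₁, hu_τρ, hu_τ₀, hp_ρ]
  ring

theorem logDRho_dRho_le_logDRho_of_isLocalMax (hn : 0 < n)
    (hf : ContDiffAt ℝ 3 (uncurry f) (ρ, t)) (hf₀ : 0 < f ρ t) (hf₁ : 0 < dRho f ρ t)
    (hPDE : ∀ᶠ z in 𝓝 (ρ, t), MomentumProfileEq n c f z.1 z.2)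
    (hspace : IsLocalMax (fun σ => logDRho (dRho f) σ t) ρ)
    (htime : IsLocalMaxOn (fun τ => logDRho (dRho f) ρ τ) (Iic t) t) :
    logDRho (dRho f) ρ t ≤ logDRho f ρ t := by
  have hq : DifferentiableAt ℝ (uncurry (logDRho (dRho f))) (ρ, t) :=
    (contDiffAt_logDRho_dRho hf hf₀.ne' hPDE).differentiableAt two_ne_zero
  have hq_ρ : dRho (logDRho (dRho f)) ρ t = 0 := hspace.deriv_eq_zero
  have hq_ρρ : dRho (dRho (logDRho (dRho f))) ρ t ≤ 0 :=
    deriv_deriv_nonpos_of_isLocalMax hspace (hasDerivAt_dRho hq).continuousAt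
  have hq_τ : 0 ≤ dTau (logDRho (dRho f)) ρ t :=
    nonneg_of_hasDerivAt_of_isLocalMaxOn_Iic htime (hasDerivAt_dTau hq)
  rw [dTau_logDRho_dRho hf hf₀.ne' hf₁.ne' hPDE, hq_ρ, mul_zero, add_zero,
    le_div_iff₀ hf₁, zero_mul] at hq_τ
  have hcoeff : 0 < 2 * n * logDRho f ρ t ^ 2 := by
    have : 0 < logDRho f ρ t := div_pos hf₁ hf₀
    positivity
  have hprod : 2 * n * logDRho f ρ t ^ 2 * (logDRho (dRho f) ρ t - logDRho f ρ t) ≤ 0 := by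
    linarith
  exact sub_nonpos.1 (nonpos_of_mul_nonpos_right hprod hcoeff)

end MomentumProfile

theorem stmt6_general {n c T b : ℝ} (hn : 0 < n) (hb : b < T) {f : ℝ → ℝ → ℝ}
    (hf : ContDiffOn ℝ 3 (uncurry f) (univ ×ˢ Ico 0 T))
    (hfpos : ∀ ρ t, t ∈ Ico 0 T → 0 < f ρ t)
    (hfρpos : ∀ ρ t, t ∈ Ico 0 T → 0 < dRho f ρ t)
    (hPDE : ∀ ρ t, t ∈ Ioo 0 T →
      dTau f ρ t = dRho (dRho f) ρ t / dRho f ρ t + n * dRho f ρ t / f ρ t - c)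
    {ρstar tstar : ℝ} (htstar : tstar ∈ Icc 0 b)
    (hmax : ∀ ρ t, t ∈ Icc 0 b →
      dRho (dRho f) ρ t / dRho f ρ t ≤ dRho (dRho f) ρstar tstar / dRho f ρstar tstar) :
    dRho (dRho f) ρstar tstar / dRho f ρstar tstar
      ≤ max (⨆ σ : ℝ, dRho (dRho f) σ 0 / dRho f σ 0)
          (dRho f ρstar tstar / f ρstar tstar) ∧
    ∀ C₀ : ℝ,
      (∀ ρ t, t ∈ Ico 0 T → C₀⁻¹ ≤ f ρ t) →
      (∀ ρ t, t ∈ Ico 0 T → dRho f ρ t ≤ C₀) →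
      ∀ ρ t, t ∈ Icc 0 b →
        dRho (dRho f) ρ t / dRho f ρ t
          ≤ max (⨆ σ : ℝ, dRho (dRho f) σ 0 / dRho f σ 0) (C₀ ^ 2) := by
  have htT : tstar ∈ Ico 0 T := ⟨htstar.1, htstar.2.trans_lt hb⟩
  have hstar : dRho (dRho f) ρstar tstar / dRho f ρstar tstar
      ≤ max (⨆ σ : ℝ, dRho (dRho f) σ 0 / dRho f σ 0)
          (dRho f ρstar tstar / f ρstar tstar) := by
    rcases htstar.1.eq_or_lt with rfl | htpos
    · exact le_max_of_le_left (le_ciSup ⟨_, forall_mem_range.2 fun σ => hmax σ 0 htstar⟩ ρstar)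
    · have hmem : ∀ᶠ z in 𝓝 (ρstar, tstar), z.2 ∈ Ioo 0 T :=
        continuousAt_snd.eventually (Ioo_mem_nhds htpos htT.2)
      refine le_max_of_le_right (logDRho_dRho_le_logDRho_of_isLocalMax hn
        (hf.contDiffAt (hmem.mono fun z hz => ⟨mem_univ _, Ioo_subset_Ico_self hz⟩))
        (hfpos _ _ htT) (hfρpos _ _ htT)
        (hmem.mono fun z hz => (hPDE z.1 z.2 hz).trans (by rw [mul_div_assoc]; rfl))
        (.of_forall fun ρ => hmax ρ tstar htstar) ?_)
      filter_upwards [Ioc_mem_nhdsLE htpos] with τ hτ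
      exact hmax ρstar τ ⟨hτ.1.le, hτ.2.trans htstar.2⟩
  refine ⟨hstar, fun C₀ hf_ge hfρ_le ρ t ht => (hmax ρ t ht).trans (hstar.trans ?_)⟩
  have hC₀ : 0 < C₀ := (hfρpos ρstar tstar htT).trans_le (hfρ_le ρstar tstar htT)
  refine max_le_max le_rfl ?_
  calc dRho f ρstar tstar / f ρstar tstar
      ≤ C₀ / C₀⁻¹ := div_le_div₀ hC₀.le (hfρ_le _ _ htT) (inv_pos.2 hC₀) (hf_ge _ _ htT)
    _ = C₀ ^ 2 := by rw [div_inv_eq_mul, sq]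

/-- Upper-bound half of part (2) of Lemma 5.2 (est_2): if `f_ρρ/f_ρ` attains its supremum
over the strip `ℝ × [0, T−ε]` at `(ρ*, t*)`, then this supremum is at most
`max( sup_σ (f_ρρ/f_ρ)(σ, 0), (f_ρ/f)(ρ*, t*) )`; in particular, if `C₀ > 1` with
`f ≥ C₀⁻¹` and `f_ρ ≤ C₀` on `ℝ × [0, T)`, then `f_ρρ/f_ρ ≤ max( sup_σ (f_ρρ/f_ρ)(σ,0), C₀² )`
on the strip. -/
theorem stmt6 (n : ℕ) (hn : 1 ≤ n) (ν lam T : ℝ) (hlam : 0 < lam) (hT : 0 < T)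
    (f : ℝ → ℝ → ℝ)
    (hf : ContDiffOn ℝ (⊤ : ℕ∞) (fun p : ℝ × ℝ => f p.1 p.2) (univ ×ˢ Ico 0 T))
    (hfpos : ∀ ρ t, t ∈ Ico 0 T → 0 < f ρ t)
    (hfρpos : ∀ ρ t, t ∈ Ico 0 T → 0 < dRho f ρ t)
    (hPDE : ∀ ρ t, t ∈ Ico 0 T →
      deriv (fun τ => f ρ τ) t
        = dRho (dRho f) ρ t / dRho f ρ t + n * dRho f ρ t / f ρ t - ν / lam)
    (ε : ℝ) (hε : 0 < ε) (hεT : ε < T)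
    (ρstar tstar : ℝ) (htstar : tstar ∈ Icc 0 (T - ε))
    (hmax : ∀ ρ t, t ∈ Icc 0 (T - ε) →
      dRho (dRho f) ρ t / dRho f ρ t ≤ dRho (dRho f) ρstar tstar / dRho f ρstar tstar) :
    dRho (dRho f) ρstar tstar / dRho f ρstar tstar
      ≤ max (⨆ σ : ℝ, dRho (dRho f) σ 0 / dRho f σ 0)
          (dRho f ρstar tstar / f ρstar tstar) ∧
    ∀ C₀ : ℝ, 1 < C₀ →
      (∀ ρ t, t ∈ Ico 0 T → C₀⁻¹ ≤ f ρ t) →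
      (∀ ρ t, t ∈ Ico 0 T → dRho f ρ t ≤ C₀) →
      ∀ ρ t, t ∈ Icc 0 (T - ε) →
        dRho (dRho f) ρ t / dRho f ρ t
          ≤ max (⨆ σ : ℝ, dRho (dRho f) σ 0 / dRho f σ 0) (C₀ ^ 2) := by
  have hmain := stmt6_general (Nat.cast_pos.2 hn) (sub_lt_self T hε)
    (hf.of_le (WithTop.coe_le_coe.2 le_top)) hfpos hfρpos
    (fun ρ t ht => hPDE ρ t (Ioo_subset_Ico_self ht)) htstar hmax
  exact ⟨hmain.1, fun C₀ _ => hmain.2 C₀⟩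
end
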